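/- arXiv:math/0305371 — 2 statements merged into one kernel-verified Lean document; each statement's English description precedes it below -/
import Mathlib

section
/- Let (G,P) be a quasi-lattice ordered group and (E,φ) a finitely aligned product system of graphs over P. Let F ⊆ E¹ be finite with s(λ) ∈ F for every λ ∈ F, let λ ∈ F have d(λ) ≠ e, and set G := F ∖ {λ}. Then for every γ ∈ ∨F ∖ ∨G there is a unique μ_γ ∈ ∨G such that whenever μ ∈ ∨G satisfies γ(e,d(μ)) = μ, one has d(μ) ≤ d(μ_γ). Moreover γ ∈ MCE(μ_γ, λ); in particular d(γ) = d(μ_γ) ∨ d(λ). -/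
open scoped Classical

noncomputable section

namespace PSG

variable {G : Type*} [Group G] {Λ : Type*}

/-- `g ≤ h` in the left-invariant partial order induced by the submonoid `P`. -/
def qle (P : Submonoid G) (g h : G) : Prop := g⁻¹ * h ∈ P

/-- `r` is a common upper bound of `p` and `q` in `P`. -/
def IsUB (P : Submonoid G) (p q r : G) : Prop := r ∈ P ∧ qle P p r ∧ qle P q r

/-- `r` is the least common upper bound of `p` and `q` in `P`. -/
def IsLUB2 (P : Submonoid G) (p q r : G) : Prop :=
  IsUB P p q r ∧ ∀ r', IsUB P p q r' → qle P r r'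

/-- `r` is the least upper bound in `P` of the set of degrees `D`. -/
def IsLUBFam (P : Submonoid G) (D : Set G) (r : G) : Prop :=
  r ∈ P ∧ (∀ p ∈ D, qle P p r) ∧ ∀ r' ∈ P, (∀ p ∈ D, qle P p r') → qle P r r'

/-- `(G, P)` is quasi-lattice ordered: `P ∩ P⁻¹ = {1}` and every pair of elements of `P`
with a common upper bound in `P` has a least upper bound in `P`. -/
def QuasiLatticeOrdered (P : Submonoid G) : Prop :=
  (∀ g ∈ P, g⁻¹ ∈ P → g = 1) ∧
    ∀ p ∈ P, ∀ q ∈ P, (∃ r, IsUB P p q r) → ∃ r, IsLUB2 P p q r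

/-- A product system of graphs over `P`, encoded on a single edge set `Λ` (which contains the
vertices as the elements of degree `1`), with degree map `d`, source and range maps `src`, `rng`
(valued in vertices), and partial multiplication `mul` (meaningful when `rng a = src b`). -/
structure IsProductSystem (P : Submonoid G) (d : Λ → G) (src rng : Λ → Λ)
    (mul : Λ → Λ → Λ) : Prop where
  countable : Countable Λ
  d_mem : ∀ a, d a ∈ P
  d_src : ∀ a, d (src a) = 1
  d_rng : ∀ a, d (rng a) = 1
  src_vertex : ∀ v, d v = 1 → src v = v
  rng_vertex : ∀ v, d v = 1 → rng v = v
  d_mul : ∀ a b, rng a = src b → d (mul a b) = d a * d b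
  src_mul : ∀ a b, rng a = src b → src (mul a b) = src a
  rng_mul : ∀ a b, rng a = src b → rng (mul a b) = rng b
  mul_assoc' : ∀ a b c, rng a = src b → rng b = src c →
    mul (mul a b) c = mul a (mul b c)
  src_mul_self : ∀ a, mul (src a) a = a
  mul_rng_self : ∀ a, mul a (rng a) = a
  factor : ∀ p q : G, p ∈ P → q ∈ P → ∀ c, d c = p * q →
    ∃! ab : Λ × Λ, d ab.1 = p ∧ d ab.2 = q ∧ rng ab.1 = src ab.2 ∧ mul ab.1 ab.2 = c

/-- `a` is an initial segment of `c`: `c = a • b` for some (necessarily unique) `b`. -/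
def IsInit (src rng : Λ → Λ) (mul : Λ → Λ → Λ) (a c : Λ) : Prop :=
  ∃ b, rng a = src b ∧ mul a b = c

/-- The set of minimal common extensions of `μ` and `ν`. -/
def MCE (P : Submonoid G) (d : Λ → G) (src rng : Λ → Λ) (mul : Λ → Λ → Λ)
    (μ ν : Λ) : Set Λ :=
  {γ | IsInit src rng mul μ γ ∧ IsInit src rng mul ν γ ∧ IsLUB2 P (d μ) (d ν) (d γ)}

/-- The product system is finitely aligned. -/
def FinitelyAligned (P : Submonoid G) (d : Λ → G) (src rng : Λ → Λ)
    (mul : Λ → Λ → Λ) : Prop :=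
  ∀ μ ν : Λ, (MCE P d src rng mul μ ν).Finite

/-- The set of minimal common extensions of a set `S` of edges. -/
def MCEset (P : Submonoid G) (d : Λ → G) (src rng : Λ → Λ) (mul : Λ → Λ → Λ)
    (S : Set Λ) : Set Λ :=
  {γ | (∀ α ∈ S, IsInit src rng mul α γ) ∧ IsLUBFam P (d '' S) (d γ)}

/-- `∨F`: the union of `MCE(S)` over the nonempty subsets `S ⊆ F`. -/
def vee (P : Submonoid G) (d : Λ → G) (src rng : Λ → Λ) (mul : Λ → Λ → Λ)
    (F : Finset Λ) : Set Λ :=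
  {γ | ∃ S : Finset Λ, S.Nonempty ∧ S ⊆ F ∧ γ ∈ MCEset P d src rng mul ↑S}

/-- Given that `a` is an initial segment of `c`, the (unique) complementary segment;
junk value `c` otherwise. -/
def tail (src rng : Λ → Λ) (mul : Λ → Λ → Λ) (a c : Λ) : Λ :=
  if h : IsInit src rng mul a c then h.choose else c

section CstarFamilies

variable (P : Submonoid G) (d : Λ → G) (src rng : Λ → Λ) (mul : Λ → Λ → Λ)
variable {B : Type*} [CStarAlgebra B] [PartialOrder B] [StarOrderedRing B]

/-- A Toeplitz `E`-family in a C*-algebra `B` (conditions (1)–(4)). -/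
structure IsToeplitzFamily (t : Λ → B) : Prop where
  vertex_sa : ∀ v, d v = 1 → IsSelfAdjoint (t v)
  vertex_idem : ∀ v, d v = 1 → t v * t v = t v
  vertex_orth : ∀ v w, d v = 1 → d w = 1 → v ≠ w → t v * t w = 0
  mul_eq : ∀ a b, rng a = src b → t a * t b = t (mul a b)
  star_mul_self : ∀ a, star (t a) * t a = t (rng a)
  dom : ∀ p : G, p ∈ P → p ≠ 1 → ∀ v, d v = 1 → ∀ F : Finset Λ,
    (∀ a ∈ F, d a = p ∧ src a = v) → (∑ a ∈ F, t a * star (t a)) ≤ t v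

/-- The Nica-covariance/Cuntz–Krieger relation (5):
`tμ* tν = ∑_{γ = μα = νβ ∈ MCE(μ,ν)} tα tβ*`. -/
def TCKrel (t : Λ → B) : Prop :=
  ∀ μ ν : Λ, ∀ M : Finset Λ, ↑M = MCE P d src rng mul μ ν →
    star (t μ) * t ν =
      ∑ γ ∈ M, t (tail src rng mul μ γ) * star (t (tail src rng mul ν γ))

/-- A Toeplitz–Cuntz–Krieger `E`-family: conditions (1)–(5). -/
def IsTCKFamily (t : Λ → B) : Prop :=
  IsToeplitzFamily P d src rng mul t ∧ TCKrel P d src rng mul t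

/-- Condition (†): for every finite `R ⊆ P∖{1}`, every vertex `v`, and all finite sets
`F_p ⊆ s_p⁻¹(v)` (`p ∈ R`), the product `∏_{p ∈ R} (t_v − ∑_{a ∈ F_p} t_a t_a*)` is nonzero.
(The factors commute, so the product is stated for an arbitrary enumeration of `R`.) -/
def Dagger (t : Λ → B) : Prop :=
  ∀ R : List G, R.Nodup → (∀ p ∈ R, p ∈ P ∧ p ≠ 1) →
    ∀ v, d v = 1 → ∀ Fp : G → Finset Λ,
      (∀ p ∈ R, ∀ a ∈ Fp p, d a = p ∧ src a = v) →
        (R.map fun p => t v - ∑ a ∈ Fp p, t a * star (t a)).prod ≠ 0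

/-- The projection `Q^{∨F}_l = t_l t_l* ∏_{l α ∈ ∨F, d α ≠ 1} (t_{s(l)} − t_{lα} t_{lα}*)`.
(The factors commute, so the product is computed over an arbitrary enumeration.) -/
def Qproj (t : Λ → B) (F : Finset Λ) (l : Λ) : B :=
  if h : {α : Λ | d α ≠ 1 ∧ rng l = src α ∧ mul l α ∈ vee P d src rng mul F}.Finite then
    t l * star (t l) *
      (h.toFinset.toList.map fun α =>
        t (src l) - t (mul l α) * star (t (mul l α))).prod
  else 0

end CstarFamilies

/-- The positive cone `ℕ^k` inside `ℤ^k` (written multiplicatively). -/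
def posCone (k : ℕ) : Submonoid (Multiplicative (Fin k → ℤ)) where
  carrier := {g | ∀ i, 0 ≤ Multiplicative.toAdd g i}
  mul_mem' := by
    intro a b ha hb i
    simpa using add_nonneg (ha i) (hb i)
  one_mem' := by
    intro i
    simp

/-- The `i`-th standard generator of `ℕ^k ⊆ ℤ^k`. -/
def egen (k : ℕ) (i : Fin k) : Multiplicative (Fin k → ℤ) :=
  Multiplicative.ofAdd (Pi.single i 1)

end PSG
namespace PSG

section Order

variable {G : Type*} [Group G] {P : Submonoid G}

theorem qle_refl (g : G) : qle P g g := by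
  simp [qle]

theorem qle_trans {a b c : G} (hab : qle P a b) (hbc : qle P b c) : qle P a c := by
  have h := P.mul_mem hab hbc
  rwa [show a⁻¹ * b * (b⁻¹ * c) = a⁻¹ * c by group] at h

theorem QuasiLatticeOrdered.qle_antisymm (hQLO : QuasiLatticeOrdered P) {a b : G}
    (hab : qle P a b) (hba : qle P b a) : a = b := by
  have h := hQLO.1 (a⁻¹ * b) hab (by simpa [qle] using hba)
  exact inv_mul_eq_one.mp h

/-- A finite nonempty family in `P` that is bounded above in `P` has a least upper bound. -/
theorem QuasiLatticeOrdered.exists_isLUBFam (hQLO : QuasiLatticeOrdered P) {ι : Type*}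
    (f : ι → G) {T : Finset ι} (hT : T.Nonempty) (hf : ∀ a ∈ T, f a ∈ P) {u : G} (hu : u ∈ P)
    (hTu : ∀ a ∈ T, qle P (f a) u) : ∃ q, IsLUBFam P (f '' ↑T) q := by
  induction hT using Finset.Nonempty.cons_induction with
  | singleton a =>
    refine ⟨f a, hf a (by simp), ?_, fun r' _ h => h _ (by simp)⟩
    simp [qle_refl]
  | cons a T ha hT ih =>
    obtain ⟨q, hq, hTq, hleast⟩ := ih (fun b hb => hf b (by simp [hb]))
      (fun b hb => hTu b (by simp [hb]))
    have hqu : qle P q u := by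
      refine hleast u hu ?_
      rintro _ ⟨b, hb, rfl⟩
      exact hTu b (by simpa using Or.inr hb)
    obtain ⟨r, ⟨hr, har, hqr⟩, hmin⟩ :=
      hQLO.2 (f a) (hf a (by simp)) q hq ⟨u, hu, hTu a (by simp), hqu⟩
    refine ⟨r, hr, ?_, fun r' hr' h => hmin r' ⟨hr', h _ ⟨a, by simp, rfl⟩, ?_⟩⟩
    · rintro _ ⟨b, hb, rfl⟩
      rcases Finset.mem_cons.mp (Finset.mem_coe.mp hb) with rfl | hb
      · exact har
      · exact qle_trans (hTq _ ⟨b, hb, rfl⟩) hqr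
    · refine hleast r' hr' ?_
      rintro _ ⟨b, hb, rfl⟩
      exact h _ ⟨b, by simpa using Or.inr hb, rfl⟩

end Order

namespace IsProductSystem

variable {G : Type*} [Group G] {Λ : Type*} {P : Submonoid G} {d : Λ → G} {src rng : Λ → Λ}
  {mul : Λ → Λ → Λ}

theorem isInit_refl (hPS : IsProductSystem P d src rng mul) (a : Λ) :
    IsInit src rng mul a a :=
  ⟨rng a, (hPS.src_vertex _ (hPS.d_rng a)).symm, hPS.mul_rng_self a⟩

theorem isInit_trans (hPS : IsProductSystem P d src rng mul) {a b c : Λ}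
    (hab : IsInit src rng mul a b) (hbc : IsInit src rng mul b c) : IsInit src rng mul a c := by
  obtain ⟨x, hx, rfl⟩ := hab
  obtain ⟨y, hy, rfl⟩ := hbc
  rw [hPS.rng_mul _ _ hx] at hy
  exact ⟨mul x y, by rw [hPS.src_mul _ _ hy, hx], (hPS.mul_assoc' _ _ _ hx hy).symm⟩

theorem src_isInit (hPS : IsProductSystem P d src rng mul) (a : Λ) :
    IsInit src rng mul (src a) a :=
  ⟨a, hPS.rng_vertex _ (hPS.d_src a), hPS.src_mul_self a⟩

theorem qle_of_isInit (hPS : IsProductSystem P d src rng mul) {a c : Λ}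
    (h : IsInit src rng mul a c) : qle P (d a) (d c) := by
  obtain ⟨b, hb, rfl⟩ := h
  simpa [qle, hPS.d_mul _ _ hb] using hPS.d_mem b

theorem exists_isInit (hPS : IsProductSystem P d src rng mul) {c : Λ} {p : G} (hp : p ∈ P)
    (hpc : qle P p (d c)) : ∃ a, IsInit src rng mul a c ∧ d a = p := by
  obtain ⟨⟨a, b⟩, ⟨ha, -, hab, hc⟩, -⟩ := hPS.factor p (p⁻¹ * d c) hp hpc c (by simp)
  exact ⟨a, ⟨b, hab, hc⟩, ha⟩

theorem isInit_unique (hPS : IsProductSystem P d src rng mul) {a a' c : Λ}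
    (ha : IsInit src rng mul a c) (ha' : IsInit src rng mul a' c) (h : d a = d a') :
    a = a' := by
  obtain ⟨b, hb, hc⟩ := ha
  obtain ⟨b', hb', hc'⟩ := ha'
  have hd : d c = d a * d b := by rw [← hc, hPS.d_mul _ _ hb]
  have hd' : d c = d a' * d b' := by rw [← hc', hPS.d_mul _ _ hb']
  have hbb : d b' = d b := by
    rw [hd, h] at hd'
    exact (mul_left_cancel hd').symm
  have := (hPS.factor (d a) (d b) (hPS.d_mem a) (hPS.d_mem b) c hd).unique
    (y₁ := (a, b)) (y₂ := (a', b')) ⟨rfl, rfl, hb, hc⟩ ⟨h.symm, hbb, hb', hc'⟩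
  exact congrArg Prod.fst this

/-- Initial segments of a common edge are nested as soon as their degrees are comparable. -/
theorem isInit_of_qle (hPS : IsProductSystem P d src rng mul) {a m c : Λ}
    (ha : IsInit src rng mul a c) (hm : IsInit src rng mul m c) (h : qle P (d a) (d m)) :
    IsInit src rng mul a m := by
  obtain ⟨a', ha', hd⟩ := hPS.exists_isInit (hPS.d_mem a) h
  rwa [hPS.isInit_unique ha (hPS.isInit_trans ha' hm) hd.symm]

theorem mem_vee_of_mem (hPS : IsProductSystem P d src rng mul) {F : Finset Λ} {a : Λ}
    (ha : a ∈ F) : a ∈ vee P d src rng mul F := by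
  refine ⟨{a}, Finset.singleton_nonempty a, by simpa using ha, ?_, hPS.d_mem a, ?_, ?_⟩
  · simpa using hPS.isInit_refl a
  · simp [qle_refl]
  · exact fun r' _ h => h _ (by simp)

/-- If some member of `F` is an initial segment of `γ`, then `γ` has an initial segment in `∨F`
whose degree dominates those of all its initial segments in `∨F`. -/
theorem exists_maximal_isInit_mem_vee (hPS : IsProductSystem P d src rng mul)
    (hQLO : QuasiLatticeOrdered P) {F : Finset Λ} {γ a : Λ} (ha : a ∈ F)
    (haγ : IsInit src rng mul a γ) :
    ∃ m ∈ vee P d src rng mul F, IsInit src rng mul m γ ∧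
      ∀ μ ∈ vee P d src rng mul F, IsInit src rng mul μ γ → qle P (d μ) (d m) := by
  classical
  let T := F.filter fun b => IsInit src rng mul b γ
  have hT : ∀ b, b ∈ T ↔ b ∈ F ∧ IsInit src rng mul b γ := fun b => Finset.mem_filter
  have hTne : T.Nonempty := ⟨a, (hT a).2 ⟨ha, haγ⟩⟩
  obtain ⟨q, hq⟩ := hQLO.exists_isLUBFam d hTne (fun b _ => hPS.d_mem b) (hPS.d_mem γ)
    (fun b hb => hPS.qle_of_isInit ((hT b).1 hb).2)
  have hqγ : qle P q (d γ) := by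
    refine hq.2.2 _ (hPS.d_mem γ) ?_
    rintro _ ⟨b, hb, rfl⟩
    exact hPS.qle_of_isInit ((hT b).1 hb).2
  obtain ⟨m, hm, rfl⟩ := hPS.exists_isInit hq.1 hqγ
  refine ⟨m, ⟨T, hTne, Finset.filter_subset _ _, fun b hb => ?_, hq⟩, hm, ?_⟩
  · exact hPS.isInit_of_qle ((hT b).1 hb).2 hm (hq.2.1 _ ⟨b, hb, rfl⟩)
  · rintro μ ⟨S, -, hSF, hSμ, hμ⟩ hμγ
    refine hμ.2.2 _ hq.1 ?_
    rintro _ ⟨b, hb, rfl⟩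
    exact hq.2.1 _ ⟨b, (hT b).2 ⟨hSF hb, hPS.isInit_trans (hSμ b hb) hμγ⟩, rfl⟩

end IsProductSystem

/-- Lemma 7.5 (maximal subpaths): for `γ ∈ ∨F ∖ ∨G` (where `G = F ∖ {λ}`), there is a unique
maximal initial segment `μ_γ` of `γ` lying in `∨G`, and `γ ∈ MCE(μ_γ, λ)`; in particular
`d(γ) = d(μ_γ) ∨ d(λ)`. -/
theorem stmt2 {G : Type*} [Group G] {Λ : Type*} (P : Submonoid G)
    (hQLO : QuasiLatticeOrdered P)
    (d : Λ → G) (src rng : Λ → Λ) (mul : Λ → Λ → Λ)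
    (hPS : IsProductSystem P d src rng mul)
    (hFA : FinitelyAligned P d src rng mul)
    (F : Finset Λ) (hsrc : ∀ a ∈ F, src a ∈ F)
    (l : Λ) (hl : l ∈ F) (hdl : d l ≠ 1) :
    ∀ γ ∈ vee P d src rng mul F \ vee P d src rng mul (F.erase l),
      (∃! m : Λ, m ∈ vee P d src rng mul (F.erase l) ∧ IsInit src rng mul m γ ∧
        ∀ μ ∈ vee P d src rng mul (F.erase l), IsInit src rng mul μ γ →
          qle P (d μ) (d m)) ∧
      (∀ m : Λ,
        (m ∈ vee P d src rng mul (F.erase l) ∧ IsInit src rng mul m γ ∧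
          ∀ μ ∈ vee P d src rng mul (F.erase l), IsInit src rng mul μ γ →
            qle P (d μ) (d m)) →
        γ ∈ MCE P d src rng mul m l ∧ IsLUB2 P (d m) (d l) (d γ)) := by
  rintro γ ⟨⟨S, hSne, hSF, hSγ, hγ⟩, hγG⟩
  have hlS : l ∈ S := by
    by_contra h
    exact hγG ⟨S, hSne, fun a ha => Finset.mem_erase.2 ⟨ne_of_mem_of_not_mem ha h, hSF ha⟩,
      hSγ, hγ⟩
  have hlγ : IsInit src rng mul l γ := hSγ l hlS
  have hsl : src l ∈ F.erase l :=
    Finset.mem_erase.2 ⟨fun h => hdl (h ▸ hPS.d_src l), hsrc l hl⟩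
  refine ⟨?_, ?_⟩
  · obtain ⟨m, hm, hmγ, hmax⟩ := hPS.exists_maximal_isInit_mem_vee hQLO hsl
      (hPS.isInit_trans (hPS.src_isInit l) hlγ)
    refine ⟨m, ⟨hm, hmγ, hmax⟩, ?_⟩
    rintro m' ⟨hm', hm'γ, hmax'⟩
    exact hPS.isInit_unique hm'γ hmγ
      (hQLO.qle_antisymm (hmax m' hm' hm'γ) (hmax' m hm hmγ))
  · rintro m ⟨-, hmγ, hmax⟩
    have hlub : IsLUB2 P (d m) (d l) (d γ) := by
      refine ⟨⟨hPS.d_mem γ, hPS.qle_of_isInit hmγ, hPS.qle_of_isInit hlγ⟩, ?_⟩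
      rintro r' ⟨hr', hmr, hlr⟩
      refine hγ.2.2 r' hr' ?_
      rintro _ ⟨a, ha, rfl⟩
      by_cases hal : a = l
      · exact hal ▸ hlr
      · exact qle_trans (hmax a (hPS.mem_vee_of_mem (Finset.mem_erase.2 ⟨hal, hSF ha⟩))
          (hSγ a ha)) hmr
    exact ⟨⟨hmγ, hlγ, hlub⟩, hlub⟩

end PSG
end
end

section
/- Let (G,P) be a quasi-lattice ordered group and (E,φ) a finitely aligned product system of graphs over P. Then the Fock family {S_λ : λ ∈ E¹} on ℓ²(E¹) is a Toeplitz–Cuntz–Krieger E-family. Moreover, for every v ∈ E⁰ and p ∈ P∖{e} with s_p⁻¹(v) finite, (S_v − ∑_{λ∈s_p⁻¹(v)} S_λ S_λ*) e_v = e_v; in particular, if some vertex emits only finitely many edges in some E_p (p ≠ e), the Fock family does not satisfy the Cuntz–Pimsner relation S_v = ∑_{λ∈s_p⁻¹(v)} S_λ S_λ*. -/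
open scoped Classical

noncomputable section

namespace PSG

section ProductSystem

variable {G : Type*} [Group G] {Λ : Type*} {P : Submonoid G}
  {d : Λ → G} {src rng : Λ → Λ} {mul : Λ → Λ → Λ}

/-- Unique factorisation, for two composable pairs whose first factors have equal degree. -/
theorem IsProductSystem.eq_of_mul_eq (h : IsProductSystem P d src rng mul) {a b a' b' : Λ}
    (hab : rng a = src b) (hab' : rng a' = src b') (hd : d a = d a')
    (he : mul a b = mul a' b') : a = a' ∧ b = b' := by
  have hm := h.d_mul a b hab
  have hm' := h.d_mul a' b' hab'
  rw [← he, hm, hd] at hm'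
  have hdb : d b = d b' := mul_left_cancel hm'
  have hu := (h.factor (d a) (d b) (h.d_mem a) (h.d_mem b) _ hm).unique
    (y₁ := (a, b)) (y₂ := (a', b')) ⟨rfl, rfl, hab, rfl⟩ ⟨hd.symm, hdb.symm, hab', he.symm⟩
  exact Prod.mk.inj hu

theorem IsInit.rng_eq {a c : Λ} (h : IsInit src rng mul a c) :
    rng a = src (tail src rng mul a c) := by
  rw [tail, dif_pos h]
  exact h.choose_spec.1

theorem IsInit.mul_tail {a c : Λ} (h : IsInit src rng mul a c) :
    mul a (tail src rng mul a c) = c := by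
  rw [tail, dif_pos h]
  exact h.choose_spec.2

theorem IsProductSystem.tail_mul (h : IsProductSystem P d src rng mul) {a b : Λ}
    (hab : rng a = src b) : tail src rng mul a (mul a b) = b :=
  have hi : IsInit src rng mul a (mul a b) := ⟨b, hab, rfl⟩
  (h.eq_of_mul_eq hi.rng_eq hab rfl hi.mul_tail).2

theorem IsInit.mul_right (h : IsProductSystem P d src rng mul) {a c b : Λ}
    (hi : IsInit src rng mul a c) (hc : rng c = src b) : IsInit src rng mul a (mul c b) := by
  obtain ⟨x, hx, rfl⟩ := hi
  rw [h.rng_mul _ _ hx] at hc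
  exact ⟨mul x b, by rw [h.src_mul _ _ hc, hx], (h.mul_assoc' _ _ _ hx hc).symm⟩

theorem IsInit.qle (h : IsProductSystem P d src rng mul) {a c : Λ}
    (hi : IsInit src rng mul a c) : qle P (d a) (d c) := by
  obtain ⟨x, hx, rfl⟩ := hi
  simpa [PSG.qle, h.d_mul _ _ hx] using h.d_mem x

theorem IsInit.eq_of_d_eq (h : IsProductSystem P d src rng mul) {a a' c : Λ}
    (hi : IsInit src rng mul a c) (hi' : IsInit src rng mul a' c) (hd : d a = d a') :
    a = a' :=
  (h.eq_of_mul_eq hi.rng_eq hi'.rng_eq hd (hi.mul_tail.trans hi'.mul_tail.symm)).1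

theorem IsProductSystem.exists_isInit_s9 (h : IsProductSystem P d src rng mul) {p : G} {c : Λ}
    (hp : p ∈ P) (hpc : PSG.qle P p (d c)) : ∃ a, d a = p ∧ IsInit src rng mul a c := by
  obtain ⟨⟨a, b⟩, ⟨h1, -, h3, h4⟩, -⟩ := h.factor p (p⁻¹ * d c) hp hpc c (by group)
  exact ⟨a, h1, b, h3, h4⟩

/-- Initial segments of the same edge are nested as soon as their degrees are. -/
theorem IsInit.of_qle (h : IsProductSystem P d src rng mul) {a a' c : Λ}
    (hi : IsInit src rng mul a c) (hi' : IsInit src rng mul a' c)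
    (hd : PSG.qle P (d a) (d a')) : IsInit src rng mul a a' := by
  obtain ⟨b, hb, hba'⟩ := h.exists_isInit_s9 (h.d_mem a) hd
  have hbc : IsInit src rng mul b c := by
    have := hba'.mul_right h hi'.rng_eq
    rwa [hi'.mul_tail] at this
  rwa [hi.eq_of_d_eq h hbc hb.symm]

theorem IsLUB2.unique (hQLO : QuasiLatticeOrdered P) {p q r r' : G}
    (hr : IsLUB2 P p q r) (hr' : IsLUB2 P p q r') : r = r' := by
  have h1 : r⁻¹ * r' ∈ P := hr.2 _ hr'.1
  have h2 : r'⁻¹ * r ∈ P := hr'.2 _ hr.1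
  have := hQLO.1 _ h1 (by simpa using h2)
  exact inv_mul_eq_one.mp this

/-- A common extension of `μ` and `ν` extends a minimal common extension. -/
theorem IsProductSystem.exists_mem_MCE (h : IsProductSystem P d src rng mul)
    (hQLO : QuasiLatticeOrdered P) {μ ν c : Λ} (hμ : IsInit src rng mul μ c)
    (hν : IsInit src rng mul ν c) :
    ∃ γ ∈ MCE P d src rng mul μ ν, IsInit src rng mul γ c := by
  have hub : IsUB P (d μ) (d ν) (d c) := ⟨h.d_mem c, hμ.qle h, hν.qle h⟩
  obtain ⟨r, hr⟩ := hQLO.2 _ (h.d_mem μ) _ (h.d_mem ν) ⟨_, hub⟩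
  obtain ⟨γ, rfl, hγ⟩ := h.exists_isInit_s9 hr.1.1 (hr.2 _ hub)
  exact ⟨γ, ⟨hμ.of_qle h hγ hr.1.2.1, hν.of_qle h hγ hr.1.2.2, hr⟩, hγ⟩

theorem IsProductSystem.eq_of_mem_MCE (h : IsProductSystem P d src rng mul)
    (hQLO : QuasiLatticeOrdered P) {μ ν γ γ' c : Λ}
    (hγ : γ ∈ MCE P d src rng mul μ ν) (hγ' : γ' ∈ MCE P d src rng mul μ ν)
    (hi : IsInit src rng mul γ c) (hi' : IsInit src rng mul γ' c) : γ = γ' :=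
  hi.eq_of_d_eq h hi' (hγ.2.2.unique hQLO hγ'.2.2)

end ProductSystem

section Fock

variable {G : Type*} [Group G] {Λ : Type*} {P : Submonoid G}
  {d : Λ → G} {src rng : Λ → Λ} {mul : Λ → Λ → Λ}
  {H : Type*} [NormedAddCommGroup H] [InnerProductSpace ℂ H]

theorem _root_.HilbertBasis.clm_ext (hb : HilbertBasis Λ ℂ H) {A B : H →L[ℂ] H}
    (h : ∀ i, A (hb i) = B (hb i)) : A = B := by
  refine ContinuousLinearMap.ext_on (s := Set.range hb) ?_ ?_
  · exact Submodule.dense_iff_topologicalClosure_eq_top.mpr hb.dense_span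
  · rintro _ ⟨i, rfl⟩
    exact h i

variable {hb : HilbertBasis Λ ℂ H} {S : Λ → H →L[ℂ] H}

theorem fock_mul (h : IsProductSystem P d src rng mul)
    (hS : ∀ a μ : Λ, S a (hb μ) = if rng a = src μ then hb (mul a μ) else 0) {a b : Λ}
    (hab : rng a = src b) : S a * S b = S (mul a b) := by
  refine hb.clm_ext fun μ => ?_
  rw [mul_apply_eq_comp, hS, hS, h.rng_mul _ _ hab]
  split_ifs with h1
  · rw [hS, if_pos (by rw [h.src_mul _ _ h1, hab]), h.mul_assoc' _ _ _ hab h1]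
  · simp

theorem fock_src_mul (h : IsProductSystem P d src rng mul)
    (hS : ∀ a μ : Λ, S a (hb μ) = if rng a = src μ then hb (mul a μ) else 0) (a : Λ) :
    S (src a) * S a = S a := by
  rw [fock_mul h hS (h.rng_vertex _ (h.d_src a)), h.src_mul_self]

theorem fock_mul_rng (h : IsProductSystem P d src rng mul)
    (hS : ∀ a μ : Λ, S a (hb μ) = if rng a = src μ then hb (mul a μ) else 0) (a : Λ) :
    S a * S (rng a) = S a := by
  rw [fock_mul h hS (h.src_vertex _ (h.d_rng a)).symm, h.mul_rng_self]

variable [CompleteSpace H]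

/-- The adjoint of a Fock operator removes an initial segment. -/
theorem fock_star_apply (h : IsProductSystem P d src rng mul)
    (hS : ∀ a μ : Λ, S a (hb μ) = if rng a = src μ then hb (mul a μ) else 0) (a c : Λ) :
    star (S a) (hb c) =
      if IsInit src rng mul a c then hb (tail src rng mul a c) else 0 := by
  refine hb.repr.injective (lp.ext (funext fun i => ?_))
  rw [hb.repr_apply_apply, hb.repr_apply_apply, ContinuousLinearMap.star_eq_adjoint,
    ContinuousLinearMap.adjoint_inner_right, hS]
  have hon := orthonormal_iff_ite.mp hb.orthonormal
  by_cases hc : IsInit src rng mul a c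
  · rw [if_pos hc, hon]
    split_ifs with h1 h2 h2
    · rw [hon, if_pos (by rw [h2, hc.mul_tail])]
    · rw [hon, if_neg]
      rintro rfl
      exact h2 (h.tail_mul h1).symm
    · exact absurd (h2 ▸ hc.rng_eq) h1
    · simp
  · rw [if_neg hc, inner_zero_right]
    split_ifs with h1
    · rw [hon, if_neg]
      exact fun he => hc ⟨i, h1, he⟩
    · simp

theorem fock_star_mul_self (h : IsProductSystem P d src rng mul)
    (hS : ∀ a μ : Λ, S a (hb μ) = if rng a = src μ then hb (mul a μ) else 0) (a : Λ) :
    star (S a) * S a = S (rng a) := by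
  refine hb.clm_ext fun μ => ?_
  rw [mul_apply_eq_comp, hS, hS, h.rng_vertex _ (h.d_rng a)]
  split_ifs with h1
  · rw [fock_star_apply h hS, if_pos ⟨μ, h1, rfl⟩, h.tail_mul h1, h1, h.src_mul_self]
  · simp

theorem fock_star_mul_eq_zero (h : IsProductSystem P d src rng mul)
    (hS : ∀ a μ : Λ, S a (hb μ) = if rng a = src μ then hb (mul a μ) else 0) {a b : Λ}
    (hd : d a = d b) (hab : a ≠ b) : star (S a) * S b = 0 := by
  refine hb.clm_ext fun μ => ?_
  rw [mul_apply_eq_comp, hS]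
  split_ifs with h1
  · rw [fock_star_apply h hS, if_neg]
    · simp
    · exact fun hi => hab (hi.eq_of_d_eq h ⟨μ, h1, rfl⟩ hd)
  · simp

theorem fock_vertex_isSelfAdjoint (h : IsProductSystem P d src rng mul)
    (hS : ∀ a μ : Λ, S a (hb μ) = if rng a = src μ then hb (mul a μ) else 0) {v : Λ}
    (hv : d v = 1) : IsSelfAdjoint (S v) := by
  have := IsSelfAdjoint.star_mul_self (S v)
  rwa [fock_star_mul_self h hS, h.rng_vertex v hv] at this

theorem fock_sum_le (h : IsProductSystem P d src rng mul)
    (hS : ∀ a μ : Λ, S a (hb μ) = if rng a = src μ then hb (mul a μ) else 0) {p : G} {v : Λ}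
    (hv : d v = 1) {F : Finset Λ} (hF : ∀ a ∈ F, d a = p ∧ src a = v) :
    ∑ a ∈ F, S a * star (S a) ≤ S v := by
  set Q := ∑ a ∈ F, S a * star (S a) with hQ
  have hsa : star (S v) = S v := fock_vertex_isSelfAdjoint h hS hv
  have hQsa : star Q = Q := by simp [hQ, star_sum]
  have hvv : S v * S v = S v := by
    simpa only [h.src_vertex v hv] using fock_src_mul h hS v
  have hvQ : S v * Q = Q := by
    rw [hQ, Finset.mul_sum]
    refine Finset.sum_congr rfl fun a ha => ?_
    rw [← mul_assoc, ← (hF a ha).2, fock_src_mul h hS]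
  have hQv : Q * S v = Q := by
    have := congrArg star hvQ
    rwa [star_mul, hQsa, hsa] at this
  have hQQ : Q * Q = Q := by
    conv_lhs => rw [hQ, Finset.sum_mul_sum]
    refine Finset.sum_congr rfl fun a ha => ?_
    rw [Finset.sum_eq_single_of_mem a ha]
    · rw [mul_assoc, ← mul_assoc (star (S a)), fock_star_mul_self h hS, ← mul_assoc,
        fock_mul_rng h hS]
    · intro b hbF hba
      rw [mul_assoc, ← mul_assoc (star (S a)),
        fock_star_mul_eq_zero h hS ((hF a ha).1.trans (hF b hbF).1.symm) hba.symm]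
      simp
  have key : star (S v - Q) * (S v - Q) = S v - Q := by
    rw [star_sub, hsa, hQsa, sub_mul, mul_sub, mul_sub, hvv, hvQ, hQv, hQQ]
    simp
  rw [← sub_nonneg, ← key]
  exact star_mul_self_nonneg _

theorem fock_TCKrel (hQLO : QuasiLatticeOrdered P) (h : IsProductSystem P d src rng mul)
    (hS : ∀ a μ : Λ, S a (hb μ) = if rng a = src μ then hb (mul a μ) else 0) :
    TCKrel P d src rng mul S := by
  intro μ ν M hM
  have hmem : ∀ γ, γ ∈ M ↔ γ ∈ MCE P d src rng mul μ ν := fun γ => by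
    rw [← hM, Finset.mem_coe]
  refine hb.clm_ext fun κ => ?_
  have hterm : ∀ γ ∈ M,
      (S (tail src rng mul μ γ) * star (S (tail src rng mul ν γ))) (hb κ) =
        if rng ν = src κ ∧ IsInit src rng mul γ (mul ν κ) then
          hb (tail src rng mul μ (mul ν κ)) else 0 := by
    intro γ hγ
    obtain ⟨⟨α, hα, hμα⟩, ⟨β, hβ, rfl⟩, -⟩ := (hmem γ).mp hγ
    rw [← hμα, h.tail_mul hα, hμα, h.tail_mul hβ, mul_apply_eq_comp,
      fock_star_apply h hS]
    have hr : rng α = rng β := by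
      rw [← h.rng_mul _ _ hα, hμα, h.rng_mul _ _ hβ]
    by_cases hi : IsInit src rng mul β κ
    · obtain ⟨x, hx, rfl⟩ := hi
      have hs : rng ν = src (mul β x) := by rw [h.src_mul _ _ hx, hβ]
      have hx' : rng (mul ν β) = src x := by rw [h.rng_mul _ _ hβ, hx]
      have hαx : rng α = src x := hr.trans hx
      have hassoc : mul ν (mul β x) = mul μ (mul α x) := by
        rw [← h.mul_assoc' _ _ _ hβ hx, ← hμα, h.mul_assoc' _ _ _ hα hαx]
      rw [if_pos ⟨x, hx, rfl⟩, h.tail_mul hx, hS, if_pos hαx,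
        if_pos ⟨hs, x, hx', h.mul_assoc' _ _ _ hβ hx⟩, hassoc,
        h.tail_mul (by rw [h.src_mul _ _ hαx, hα])]
    · rw [if_neg hi, if_neg, map_zero]
      rintro ⟨hs, x, hx, he⟩
      rw [h.rng_mul _ _ hβ] at hx
      rw [h.mul_assoc' _ _ _ hβ hx] at he
      exact hi ⟨x, hx, (h.eq_of_mul_eq (by rw [h.src_mul _ _ hx, hβ]) hs rfl he).2⟩
  rw [sum_apply, Finset.sum_congr rfl hterm, mul_apply_eq_comp,
    hS]
  by_cases hs : rng ν = src κ
  · rw [if_pos hs, fock_star_apply h hS]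
    have hν : IsInit src rng mul ν (mul ν κ) := ⟨κ, hs, rfl⟩
    by_cases hi : IsInit src rng mul μ (mul ν κ)
    · obtain ⟨γ, hγ, hγi⟩ := h.exists_mem_MCE hQLO hi hν
      rw [if_pos hi, Finset.sum_eq_single_of_mem γ ((hmem γ).mpr hγ), if_pos ⟨hs, hγi⟩]
      intro γ' hγ' hne
      rw [if_neg]
      exact fun hc => hne (h.eq_of_mem_MCE hQLO ((hmem γ').mp hγ') hγ hc.2 hγi)
    · rw [if_neg hi, Finset.sum_eq_zero]
      intro γ hγ
      rw [if_neg]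
      rintro ⟨-, hγi⟩
      have := ((hmem γ).mp hγ).1.mul_right h hγi.rng_eq
      rw [hγi.mul_tail] at this
      exact hi this
  · simp [hs]

theorem fock_isTCKFamily (hQLO : QuasiLatticeOrdered P) (h : IsProductSystem P d src rng mul)
    (hS : ∀ a μ : Λ, S a (hb μ) = if rng a = src μ then hb (mul a μ) else 0) :
    IsTCKFamily P d src rng mul S where
  left :=
    { vertex_sa := fun _ hv => fock_vertex_isSelfAdjoint h hS hv
      vertex_idem := fun v hv => by
        simpa only [h.src_vertex v hv] using fock_src_mul h hS v
      vertex_orth := fun v w hv hw hvw => by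
        rw [← (fock_vertex_isSelfAdjoint h hS hv).star_eq]
        exact fock_star_mul_eq_zero h hS (hv.trans hw.symm) hvw
      mul_eq := fun _ _ => fock_mul h hS
      star_mul_self := fock_star_mul_self h hS
      dom := fun _ _ _ _ hv _ hF => fock_sum_le h hS hv hF }
  right := fock_TCKrel hQLO h hS

/-- A vertex has no initial segment of nontrivial degree, so `S_a*` annihilates `e_v`. -/
theorem fock_star_apply_vertex (hQLO : QuasiLatticeOrdered P)
    (h : IsProductSystem P d src rng mul)
    (hS : ∀ a μ : Λ, S a (hb μ) = if rng a = src μ then hb (mul a μ) else 0) {a v : Λ}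
    (hv : d v = 1) (ha : d a ≠ 1) : star (S a) (hb v) = 0 := by
  rw [fock_star_apply h hS, if_neg]
  intro hi
  have := hi.qle h
  rw [qle, hv, mul_one] at this
  exact ha (hQLO.1 _ (h.d_mem a) this)

end Fock

/-- Example 6.3 (the Fock representation): the Fock family `{S_λ}` on `ℓ²(E¹)` is a
Toeplitz–Cuntz–Krieger `E`-family, and `(S_v − ∑_{λ∈s_p⁻¹(v)} S_λ S_λ*) e_v = e_v` whenever
`s_p⁻¹(v)` is finite; in particular the Cuntz–Pimsner relation fails at such `v`, `p`. -/
theorem stmt9 {G : Type*} [Group G] {Λ : Type*} (P : Submonoid G)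
    (hQLO : QuasiLatticeOrdered P)
    (d : Λ → G) (src rng : Λ → Λ) (mul : Λ → Λ → Λ)
    (hPS : IsProductSystem P d src rng mul)
    (hFA : FinitelyAligned P d src rng mul)
    {H : Type*} [NormedAddCommGroup H] [InnerProductSpace ℂ H] [CompleteSpace H]
    (hb : HilbertBasis Λ ℂ H)
    (S : Λ → H →L[ℂ] H)
    (hS : ∀ a μ : Λ, S a (hb μ) = if rng a = src μ then hb (mul a μ) else 0) :
    IsTCKFamily P d src rng mul S ∧
    (∀ v, d v = 1 → ∀ p, p ∈ P → p ≠ 1 →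
      ∀ M : Finset Λ, (↑M = {a : Λ | d a = p ∧ src a = v}) →
        ((S v - ∑ a ∈ M, S a * star (S a)) (hb v) = hb v ∧
          S v ≠ ∑ a ∈ M, S a * star (S a))) := by
  refine ⟨fock_isTCKFamily hQLO hPS hS, fun v hv p _ hp1 M hM => ?_⟩
  have hsum : (∑ a ∈ M, S a * star (S a)) (hb v) = 0 := by
    rw [sum_apply]
    refine Finset.sum_eq_zero fun a ha => ?_
    have hda : d a = p := (hM.subset (Finset.mem_coe.mpr ha)).1
    rw [mul_apply_eq_comp,
      fock_star_apply_vertex hQLO hPS hS hv (hda ▸ hp1), map_zero]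
  have hSv : S v (hb v) = hb v := by
    have hmul := hPS.src_mul_self v
    rw [hPS.src_vertex v hv] at hmul
    rw [hS, hPS.rng_vertex v hv, hPS.src_vertex v hv, if_pos rfl, hmul]
  refine ⟨by rw [sub_apply, hSv, hsum, sub_zero], fun he => ?_⟩
  rw [← he, hSv] at hsum
  exact hb.orthonormal.ne_zero v hsum

end PSG
end
end
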